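/- Let n ≥ 2, let 𝓔 ⊂ 𝓛ⁿ contain all closed balls, and let ∂ : 𝓔 → 𝓛ⁿ be sequentially approximable on 𝓔 by polarizations, i.e., there is a sequence (P_k) of polarizations with ‖1_{(P_k ∘ ⋯ ∘ P_1)A} − 1_{∂A}‖_{L¹} → 0 for every A ∈ 𝓔. Then there is a hyperplane H such that for every closed ball B ⊂ ℝⁿ, ∂B = ∂B†, essentially, where B† is the reflection of B in H. In particular, for every v ∈ ℝⁿ with v ≠ 0, the translation map A ↦ A + v on 𝓔 is not sequentially approximable on 𝓔 by polarizations. -/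

import Mathlib

open MeasureTheory Metric Filter Topology
open scoped RealInnerProductSpace

noncomputable section

abbrev Euc (n : ℕ) : Type := EuclideanSpace ℝ (Fin n)

/-- `A` is essentially equal to `B` (up to a set of measure zero). -/
def essEq {n : ℕ} (A B : Set (Euc n)) : Prop := volume ((A \ B) ∪ (B \ A)) = 0

/-- The symmetric difference of two sets. -/
def sd {n : ℕ} (A B : Set (Euc n)) : Set (Euc n) := (A \ B) ∪ (B \ A)

/-- The polarization of `A` with respect to the oriented hyperplane `{x : ⟪x,v⟫ = c}` whose
positive closed halfspace is `{x : ⟪x,v⟫ ≥ c}`. -/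
def polzn {n : ℕ} (v : Euc n) (c : ℝ) (A : Set (Euc n)) : Set (Euc n) :=
  {x | c ≤ ⟪x, v⟫ ∧ (x ∈ A ∨ x - (2 * (⟪x, v⟫ - c)) • v ∈ A)} ∪
  {x | ⟪x, v⟫ ≤ c ∧ x ∈ A ∧ x - (2 * (⟪x, v⟫ - c)) • v ∈ A}

/-- `P k ∘ ⋯ ∘ P 0`, the composition of the first `k + 1` maps of a sequence. -/
def seqComp {α : Type*} (P : ℕ → α → α) : ℕ → α → α
  | 0 => P 0
  | k + 1 => P (k + 1) ∘ seqComp P k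

/-- `D` is sequentially approximable on `𝓔` by polarizations. -/
def seqApproxPol {n : ℕ} (𝓔 : Set (Set (Euc n))) (D : Set (Euc n) → Set (Euc n)) : Prop :=
  ∃ P : ℕ → Set (Euc n) → Set (Euc n),
    (∀ k, ∃ (v : Euc n) (c : ℝ), ‖v‖ = 1 ∧ P k = polzn v c) ∧
    ∀ A ∈ 𝓔, Tendsto (fun k => volume (sd (seqComp P k A) (D A))) atTop (𝓝 0)

/-!
Only the first polarization matters. If `H` is its mirror, a set and its reflection in `H` have the
same first polarization, hence the same image under every composition `P k ∘ ⋯ ∘ P 0`, hence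
essentially the same limit. An open injective map such as a translation cannot be the limit: it
sends a small ball off `H` and its mirror image to disjoint sets of positive measure.
-/

open EuclideanGeometry
open scoped symmDiff

section Hyperplane

variable {F : Type*} [NormedAddCommGroup F] [InnerProductSpace ℝ F]

/-- The hyperplane through `c • v` orthogonal to `v`. For a unit vector `v` this is
`{x | ⟪x, v⟫ = c}`, the mirror of the polarization `polzn v c`. -/
def hyperplane (v : F) (c : ℝ) : AffineSubspace ℝ F := AffineSubspace.mk' (c • v) (ℝ ∙ v)ᗮ

instance (v : F) (c : ℝ) : Nonempty (hyperplane v c) :=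
  inferInstanceAs (Nonempty (AffineSubspace.mk' (c • v) (ℝ ∙ v)ᗮ))

instance (v : F) (c : ℝ) : (hyperplane v c).direction.HasOrthogonalProjection := by
  rw [hyperplane, AffineSubspace.direction_mk']
  infer_instance

theorem mem_hyperplane {v : F} (hv : ‖v‖ = 1) {c : ℝ} {x : F} :
    x ∈ hyperplane v c ↔ ⟪x, v⟫ = c := by
  rw [hyperplane, AffineSubspace.mem_mk', vsub_eq_sub,
    Submodule.mem_orthogonal_singleton_iff_inner_left, inner_sub_left, real_inner_smul_left,
    real_inner_self_eq_norm_sq, hv, one_pow, mul_one, sub_eq_zero]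

theorem smul_mem_orthogonal_direction_hyperplane (t : ℝ) (v : F) (c : ℝ) :
    t • v ∈ (hyperplane v c).directionᗮ := by
  rw [hyperplane, AffineSubspace.direction_mk']
  exact Submodule.le_orthogonal_orthogonal _
    (Submodule.smul_mem _ t (Submodule.mem_span_singleton_self v))

theorem reflection_hyperplane_apply {v : F} (hv : ‖v‖ = 1) (c : ℝ) (x : F) :
    reflection (hyperplane v c) x = x - (2 * (⟪x, v⟫ - c)) • v := by
  have hfoot : x - (⟪x, v⟫ - c) • v ∈ hyperplane v c := by
    rw [mem_hyperplane hv, inner_sub_left, real_inner_smul_left, real_inner_self_eq_norm_sq, hv]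
    ring
  have hrefl := reflection_orthogonal_vadd hfoot
    (smul_mem_orthogonal_direction_hyperplane (⟪x, v⟫ - c) v c)
  rw [vadd_eq_add, vadd_eq_add, add_sub_cancel] at hrefl
  rw [hrefl]
  module

theorem dist_reflection_hyperplane_self {v : F} (hv : ‖v‖ = 1) (c : ℝ) (x : F) :
    dist x (reflection (hyperplane v c) x) = 2 * |⟪x, v⟫ - c| := by
  rw [reflection_hyperplane_apply hv, dist_self_sub_right, norm_smul, hv, mul_one,
    Real.norm_eq_abs, abs_mul, abs_two]

theorem image_reflection_hyperplane_closedBall {v : F} (hv : ‖v‖ = 1) (c : ℝ) (x : F) (r : ℝ) :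
    reflection (hyperplane v c) '' closedBall x r =
      closedBall (x - (2 * (⟪x, v⟫ - c)) • v) r := by
  rw [← reflection_hyperplane_apply hv]
  exact (reflection (hyperplane v c)).toIsometryEquiv.image_closedBall x r

theorem exists_disjoint_image_reflection_hyperplane_closedBall {v : F} (hv : ‖v‖ = 1) (c : ℝ) :
    ∃ (x : F) (r : ℝ), 0 < r ∧
      Disjoint (closedBall x r) (reflection (hyperplane v c) '' closedBall x r) := by
  refine ⟨(c + 1) • v, 1 / 2, by norm_num, ?_⟩
  have hdist : dist ((c + 1) • v) (reflection (hyperplane v c) ((c + 1) • v)) = 2 := by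
    simp [dist_reflection_hyperplane_self hv, real_inner_smul_left, hv]
  rw [image_reflection_hyperplane_closedBall hv, ← reflection_hyperplane_apply hv]
  exact closedBall_disjoint_closedBall (by norm_num [hdist])

end Hyperplane

section Measure

variable {α : Type*} [MeasurableSpace α] {μ : Measure α}

theorem ae_eq_of_tendsto_measure_symmDiff {ι : Type*} {l : Filter ι} [l.NeBot]
    {F : ι → Set α} {A B : Set α} (hA : Tendsto (fun i => μ (F i ∆ A)) l (𝓝 0))
    (hB : Tendsto (fun i => μ (F i ∆ B)) l (𝓝 0)) : A =ᵐ[μ] B := by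
  have hsum : Tendsto (fun i => μ (A ∆ F i) + μ (F i ∆ B)) l (𝓝 0) := by
    simpa only [symmDiff_comm A, add_zero] using hA.add hB
  exact measure_symmDiff_eq_zero_iff.1 <|
    nonpos_iff_eq_zero.1 <| ge_of_tendsto' hsum fun i => measure_symmDiff_le A (F i) B

theorem measure_eq_zero_of_disjoint_of_ae_eq {A B : Set α} (hdisj : Disjoint A B)
    (hAB : A =ᵐ[μ] B) : μ A = 0 := by
  rw [← hdisj.sdiff_eq_left]
  exact ae_le_set.1 hAB.le

end Measure

theorem seqComp_congr {α : Type*} {P : ℕ → α → α} {a b : α} (h : P 0 a = P 0 b) (k : ℕ) :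
    seqComp P k a = seqComp P k b := by
  induction k with
  | zero => exact h
  | succ k ih => exact congrArg (P (k + 1)) ih

section Polarization

variable {n : ℕ}

theorem essEq_iff_ae_eq {A B : Set (Euc n)} : essEq A B ↔ A =ᵐ[volume] B :=
  measure_symmDiff_eq_zero_iff

theorem mem_polzn {v : Euc n} (hv : ‖v‖ = 1) {c : ℝ} {A : Set (Euc n)} {x : Euc n} :
    x ∈ polzn v c A ↔
      c ≤ ⟪x, v⟫ ∧ (x ∈ A ∨ reflection (hyperplane v c) x ∈ A) ∨
        ⟪x, v⟫ ≤ c ∧ x ∈ A ∧ reflection (hyperplane v c) x ∈ A := by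
  rw [reflection_hyperplane_apply hv]
  rfl

theorem polzn_image_reflection {v : Euc n} (hv : ‖v‖ = 1) (c : ℝ) (A : Set (Euc n)) :
    polzn v c (reflection (hyperplane v c) '' A) = polzn v c A := by
  have himage : ∀ x, x ∈ reflection (hyperplane v c) '' A ↔ reflection (hyperplane v c) x ∈ A :=
    fun x => Set.mem_image_iff_of_inverse (reflection_involutive _) (reflection_involutive _)
  ext x
  simp only [mem_polzn hv, himage, reflection_reflection, or_comm, and_comm]

theorem seqApproxPol.exists_reflection_essEq {𝓔 : Set (Set (Euc n))}
    {D : Set (Euc n) → Set (Euc n)} (hD : seqApproxPol 𝓔 D) :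
    ∃ (v : Euc n) (c : ℝ), ‖v‖ = 1 ∧
      ∀ A ∈ 𝓔, reflection (hyperplane v c) '' A ∈ 𝓔 →
        essEq (D A) (D (reflection (hyperplane v c) '' A)) := by
  obtain ⟨P, hP, hlim⟩ := hD
  obtain ⟨v, c, hv, hP0⟩ := hP 0
  refine ⟨v, c, hv, fun A hA hσA => essEq_iff_ae_eq.2 ?_⟩
  have hcomp : ∀ k, seqComp P k (reflection (hyperplane v c) '' A) = seqComp P k A :=
    seqComp_congr (by rw [hP0, polzn_image_reflection hv])
  have hlim' := hlim _ hσA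
  simp only [hcomp] at hlim'
  exact ae_eq_of_tendsto_measure_symmDiff (hlim A hA) hlim'

theorem not_seqApproxPol_image {𝓔 : Set (Set (Euc n))}
    (h𝓔balls : ∀ (x : Euc n) (r : ℝ), 0 < r → closedBall x r ∈ 𝓔)
    {f : Euc n → Euc n} (hfo : IsOpenMap f) (hfi : f.Injective) :
    ¬ seqApproxPol 𝓔 (fun A => f '' A) := by
  intro hf
  obtain ⟨v, c, hv, hess⟩ := hf.exists_reflection_essEq
  obtain ⟨x, r, hr, hdisj⟩ := exists_disjoint_image_reflection_hyperplane_closedBall hv c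
  have hσB : reflection (hyperplane v c) '' closedBall x r ∈ 𝓔 := by
    rw [image_reflection_hyperplane_closedBall hv]
    exact h𝓔balls _ r hr
  have hnull : volume (f '' closedBall x r) = 0 :=
    measure_eq_zero_of_disjoint_of_ae_eq (Set.disjoint_image_of_injective hfi hdisj)
      (essEq_iff_ae_eq.1 (hess _ (h𝓔balls x r hr) hσB))
  have hpos : 0 < volume (f '' closedBall x r) :=
    Measure.measure_pos_of_mem_nhds volume (hfo.image_mem_nhds (closedBall_mem_nhds x hr))
  exact hpos.ne' hnull

theorem stmt16_general {𝓔 : Set (Set (Euc n))}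
    (h𝓔balls : ∀ (x : Euc n) (r : ℝ), 0 < r → closedBall x r ∈ 𝓔)
    {D : Set (Euc n) → Set (Euc n)} (hseq : seqApproxPol 𝓔 D) :
    (∃ (v : Euc n) (c : ℝ), ‖v‖ = 1 ∧
      ∀ A ∈ 𝓔, reflection (hyperplane v c) '' A ∈ 𝓔 →
        essEq (D A) (D (reflection (hyperplane v c) '' A))) ∧
    ∀ f : Euc n → Euc n, IsOpenMap f → f.Injective → ¬ seqApproxPol 𝓔 (fun A => f '' A) :=
  ⟨hseq.exists_reflection_essEq, fun _ => not_seqApproxPol_image h𝓔balls⟩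

end Polarization

/-- Lemma 5.3: if `∂ : 𝓔 → 𝓛ⁿ` is sequentially approximable on `𝓔` by polarizations, where
`𝓔` contains all balls, then there is a hyperplane `H` such that `∂B = ∂B†`, essentially,
for each ball `B`, where `B†` is the reflection of `B` in `H`.  In particular, nontrivial
translations are not sequentially approximable on `𝓔` by polarizations. -/
theorem stmt16 {n : ℕ} (hn : 2 ≤ n)
    (𝓔 : Set (Set (Euc n)))
    (h𝓔meas : ∀ A ∈ 𝓔, MeasurableSet A ∧ volume A ≠ ⊤)
    (h𝓔balls : ∀ (x : Euc n) (r : ℝ), 0 < r → closedBall x r ∈ 𝓔)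
    (D : Set (Euc n) → Set (Euc n))
    (hDmeas : ∀ A ∈ 𝓔, MeasurableSet (D A) ∧ volume (D A) ≠ ⊤)
    (hseq : seqApproxPol 𝓔 D) :
    (∃ (v : Euc n) (c : ℝ), ‖v‖ = 1 ∧
      ∀ (x : Euc n) (r : ℝ), 0 < r →
        essEq (D (closedBall x r))
          (D (closedBall (x - (2 * (⟪x, v⟫ - c)) • v) r))) ∧
    (∀ w : Euc n, w ≠ 0 → ¬ seqApproxPol 𝓔 (fun A => (fun y => y + w) '' A)) := by
  obtain ⟨⟨v, c, hv, hess⟩, himage⟩ := stmt16_general h𝓔balls hseq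
  exact ⟨⟨v, c, hv, fun x r hr => by
    simpa [image_reflection_hyperplane_closedBall hv, h𝓔balls _ r hr]
      using hess _ (h𝓔balls x r hr)⟩,
    fun w _ => himage _ (isOpenMap_add_right w) (add_left_injective w)⟩
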